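/- Suppose Algorithm 1 is run on an on-line P_9-free bipartite graph G and a vertex v receives color a_k with k ≥ 2. Then C_k[v] contains an induced copy of X_{⌊√(k/2)⌋} such that the root of the copy lies on the same side of G as v. -/

import Mathlib

/-! ### P_n-free graphs -/

/-- `f` lists the vertices of an induced path on `n` vertices in `G`. -/
def IsInducedPath {V : Type*} (G : SimpleGraph V) (n : ℕ) (f : Fin n → V) : Prop :=
  Function.Injective f ∧
    ∀ a b : Fin n, G.Adj (f a) (f b) ↔ (a.val + 1 = b.val ∨ b.val + 1 = a.val)

/-- `G` contains no induced path on `n` vertices. -/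
def PFree {V : Type*} (G : SimpleGraph V) (n : ℕ) : Prop :=
  ¬ ∃ f : Fin n → V, IsInducedPath G n f

/-! ### The graphs `X_k` -/

/-- Vertex set of the graph `X_k` (with a junk value at `k = 0`). -/
def XV : ℕ → Type
  | 0 => PUnit
  | 1 => PUnit
  | 2 => Bool
  | (n+3) => Option (XV (n+2) ⊕ XV (n+2))

/-- The root of `X_k`. -/
def XRoot : (k : ℕ) → XV k
  | 0 => PUnit.unit
  | 1 => PUnit.unit
  | 2 => true
  | (_+3) => none

/-- The side of a vertex of `X_k`: `true` is the root side, `false` the non-root side. -/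
def XSide : (k : ℕ) → XV k → Bool
  | 0, _ => true
  | 1, _ => true
  | 2, v => v
  | (_+3), none => true
  | (n+3), some (Sum.inl x) => !(XSide (n+2) x)
  | (n+3), some (Sum.inr x) => XSide (n+2) x

/-- Base adjacency relation of `X_k`:  for `k ≥ 3`, `X_k` consists of two disjoint copies of
`X_{k-1}` with no edges in between, together with a root vertex joined to the root side of the
first copy and to the non-root side of the second copy. -/
def XRel : (k : ℕ) → XV k → XV k → Prop
  | 0, _, _ => False
  | 1, _, _ => False
  | 2, u, v => u ≠ v
  | (n+3), none, some (Sum.inl x) => XSide (n+2) x = true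
  | (n+3), none, some (Sum.inr x) => XSide (n+2) x = false
  | (n+3), some (Sum.inl x), none => XSide (n+2) x = true
  | (n+3), some (Sum.inr x), none => XSide (n+2) x = false
  | (n+3), some (Sum.inl x), some (Sum.inl y) => XRel (n+2) x y
  | (n+3), some (Sum.inr x), some (Sum.inr y) => XRel (n+2) x y
  | (_+3), _, _ => False

/-- The graph `X_k`. -/
def XGraph (k : ℕ) : SimpleGraph (XV k) := SimpleGraph.fromRel (XRel k)

/-! ### Algorithm 1 -/

/-- The three palettes of colors `a_i`, `b_i`, `c_i` used by Algorithm 1. -/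
inductive PalColor : Type
  | a : ℕ → PalColor
  | b : ℕ → PalColor
  | c : ℕ → PalColor
  deriving DecidableEq

/-- The index of a color. -/
def PalColor.index : PalColor → ℕ
  | a i => i
  | b i => i
  | c i => i

/-- A vertex `u` has color index `j` when its color is `a_j` or `b_j`. -/
def hasColorIndex (col : ℕ → PalColor) (u j : ℕ) : Prop :=
  col u = PalColor.a j ∨ col u = PalColor.b j

/-- Vertex set of `G_i[u]` at time `t` (vertices are presented in the order `0, 1, 2, …`):
the vertices presented before time `t` whose color has index between `1` and `i`,
together with `u`. -/
def domSet (col : ℕ → PalColor) (t i u : ℕ) : Set ℕ :=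
  {w | (w < t ∧ 1 ≤ (col w).index ∧ (col w).index ≤ i) ∨ w = u}

/-- `x` and `y` are connected within the subgraph of `G` induced on `S`. -/
def ReachIn (G : SimpleGraph ℕ) (S : Set ℕ) (x y : ℕ) : Prop :=
  ∃ (hx : x ∈ S) (hy : y ∈ S), (G.induce S).Reachable ⟨x, hx⟩ ⟨y, hy⟩

/-- `x` and `y` are joined by a walk of even length within the subgraph of `G` induced on `S`;
in a bipartite graph this says exactly that `x` and `y` are on the same side of their
(common) connected component. -/
def EvenReachIn (G : SimpleGraph ℕ) (S : Set ℕ) (x y : ℕ) : Prop :=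
  ∃ (hx : x ∈ S) (hy : y ∈ S) (p : (G.induce S).Walk ⟨x, hx⟩ ⟨y, hy⟩), Even p.length

/-- `C_i[u]` at time `t`: the connected component of `u` in the subgraph induced on
`domSet col t i u`. -/
def comp (G : SimpleGraph ℕ) (col : ℕ → PalColor) (t i u : ℕ) : Set ℕ :=
  {w | ReachIn G (domSet col t i u) u w}

/-- `C_i^y(u)` at time `t`: the connected component of `y` in `C_i(u) = C_i[u] \ {u}`. -/
def compMinus (G : SimpleGraph ℕ) (col : ℕ → PalColor) (t i u y : ℕ) : Set ℕ :=
  {w | ReachIn G (domSet col t i u \ {u}) y w}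

/-- Color `a_i` is mixed in `C_i[t]` at time `t`: vertices on both sides of `C_i[t]`
have color `a_i`. -/
def MixedA (G : SimpleGraph ℕ) (col : ℕ → PalColor) (t i : ℕ) : Prop :=
  ∃ x ∈ comp G col t i t, ∃ y ∈ comp G col t i t,
    col x = PalColor.a i ∧ col y = PalColor.a i ∧
    ¬ EvenReachIn G (domSet col t i t) x y

/-- `m = max {i ≥ 1 | a_i is mixed in C_i[t]} + 1` (with `max ∅ = 0`). -/
noncomputable def mIdx (G : SimpleGraph ℕ) (col : ℕ → PalColor) (t : ℕ) : ℕ :=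
  sSup {i | 1 ≤ i ∧ MixedA G col t i} + 1

/-- `u'` is universal to `C_{j-1}[u]` (at time `t`): `u'` is adjacent to all vertices in one of
the two sides of `C_{j-1}[u]`. -/
def UnivTo (G : SimpleGraph ℕ) (col : ℕ → PalColor) (t j u u' : ℕ) : Prop :=
  (∀ x ∈ comp G col t (j-1) u, EvenReachIn G (domSet col t (j-1) u) u x → G.Adj u' x) ∨
  (∀ x ∈ comp G col t (j-1) u, ¬ EvenReachIn G (domSet col t (j-1) u) u x → G.Adj u' x)

open Classical in
/-- One step of Algorithm 1: the color given to the vertex presented at time `t`, assuming that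
`col` records the colors of the previously presented vertices `0, …, t-1`. -/
noncomputable def step (G : SimpleGraph ℕ) (col : ℕ → PalColor) (t : ℕ) : PalColor :=
  let m := mIdx G col t
  let S := domSet col t m t
  let C := comp G col t m t
  let I1 : Set ℕ := {x ∈ C | EvenReachIn G S t x}
  let I2 : Set ℕ := {x ∈ C | ¬ EvenReachIn G S t x}
  if ∃ u ∈ I2, col u = PalColor.a m then PalColor.b m
  else if ∃ u ∈ I2, col u = PalColor.c m then PalColor.a m
  else if ∃ u ∈ I1 ∪ I2, ∃ u' ∈ I2, ∃ j : ℕ, hasColorIndex col u j ∧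
      ((m : ℝ) - Real.sqrt (2 * m) + 2 ≤ (j : ℝ)) ∧ UnivTo G col t j u u'
    then PalColor.c m
  else PalColor.a m

/-- The colors of the first `k` presented vertices under Algorithm 1 (junk elsewhere). -/
noncomputable def algoColAux (G : SimpleGraph ℕ) : ℕ → ℕ → PalColor
  | 0 => fun _ => PalColor.a 0
  | (k+1) => fun w => if w = k then step G (algoColAux G k) k else algoColAux G k w

/-- `algoCol G v` is the color that Algorithm 1 assigns to vertex `v` when the on-line graph `G`
is presented in the vertex order `0, 1, 2, …`. -/
noncomputable def algoCol (G : SimpleGraph ℕ) (v : ℕ) : PalColor :=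
  algoColAux G (v + 1) v

/-- The on-line graph on `ℕ` obtained by presenting the vertices of `G` in the order given by
the enumeration `π` (vertices `≥ n` are isolated). -/
def toNatGraph {V : Type*} (G : SimpleGraph V) {n : ℕ} (π : Fin n ≃ V) : SimpleGraph ℕ :=
  SimpleGraph.fromRel (fun i j => ∃ (hi : i < n) (hj : j < n), G.Adj (π ⟨i, hi⟩) (π ⟨j, hj⟩))

/-!
Let `2s² ≤ k` and let `v` be colored `a_k`; the copy of `X_s` is found by induction on `k`. A vertex
`u` of index `j + 1` sees vertices colored `a_j` on both sides of `C_j(u)`. Two such vertices on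
opposite sides lie in different components of `C_j(u)`: no vertex is colored `a_j` opposite to an
`a_j` of its own component, and a vertex whose arrival mixes `a_j` gets an index larger than `j`.
They are the roots of the two smaller copies in the recursive definition of `X`.

Suppose first that some `p` on the side of `v` is universal to `C_{j-1}[u]`, where the index `j` of
`u` is above the threshold. As `j - 1 ≥ 2(s - 1)²`, the induction hypothesis gives a copy of
`X_{s-1}` at each of two opposite vertices colored `a_{j-1}` in `C_{j-1}[u]`, and `p` completes them
to a copy of `X_s`.

Otherwise no vertex at all is universal to `C_{h-1}[w]` for any `w` of index `h ≥ k + 2 - 2s`, since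
one on the side opposite to `v` would have led to the color `c_k`. Let `u` have index `j + 1`. Two
induced `P_5` from `u` into different components of `C_j(u)` would form a `P_9`, so one of the
components admits no such `P_5`. Let `w` be a vertex of it, opposite to `u` and of index `h` as
above. If `u` had no neighbor in `C_{h-1}[w]`, then, `P_5` being excluded, a neighbor of `u` with a
neighbor there would be universal to `C_{h-1}[w]`. So `u` has a neighbor there, and since `w` has
neighbors in two components of `C_{h-1}(w)`, excluding `P_5` again shows that `u` is adjacent to
`w`. Hence `u` can serve as the root over copies made of vertices of high index in that component.
Each round lowers the index by two, so there is room for `s` rounds starting from `v`.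
-/

theorem bool_eq_of_ne_of_ne {a b c : Bool} (ha : a ≠ b) (hc : c ≠ b) : a = c :=
  (Bool.eq_not.2 ha).trans (Bool.eq_not.2 hc).symm

section InducedPath

variable {V : Type*} {G : SimpleGraph V}

theorem isInducedPath_of_lt {n : ℕ} {f : Fin n → V}
    (h : ∀ i j, i < j → f i ≠ f j ∧ (G.Adj (f i) (f j) ↔ i.val + 1 = j.val)) :
    IsInducedPath G n f := by
  refine ⟨.of_lt_imp_ne fun i j hij => (h i j hij).1, fun i j => ?_⟩
  obtain hij | rfl | hij := lt_trichotomy i j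
  · rw [(h i j hij).2]
    have := Fin.lt_def.1 hij
    omega
  · simp
  · rw [G.adj_comm, (h j i hij).2]
    have := Fin.lt_def.1 hij
    omega

/-- No induced path with `m` edges starts at `u` and has all its other vertices in `E`. -/
def PFreeFrom (G : SimpleGraph V) (m : ℕ) (u : V) (E : Set V) : Prop :=
  ¬ ∃ f : Fin (m + 1) → V, IsInducedPath G (m + 1) f ∧ f 0 = u ∧ ∀ i, i ≠ 0 → f i ∈ E

theorem PFreeFrom.mono {m : ℕ} {u : V} {E F : Set V} (h : PFreeFrom G m u F) (hEF : E ⊆ F) :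
    PFreeFrom G m u E :=
  fun ⟨f, hf, hfu, hfE⟩ => h ⟨f, hf, hfu, fun i hi => hEF (hfE i hi)⟩

/-- The sets `S` and `T` are disjoint and there are no edges between them. -/
def Anticomplete (G : SimpleGraph V) (S T : Set V) : Prop :=
  ∀ a ∈ S, ∀ b ∈ T, a ≠ b ∧ ¬ G.Adj a b

theorem Anticomplete.mono {S S' T T' : Set V}
    (h : Anticomplete G S T) (hS : S' ⊆ S) (hT : T' ⊆ T) : Anticomplete G S' T' :=
  fun a ha b hb => h a (hS ha) b (hT hb)

-- Two induced paths leaving `u` into anticomplete sets would concatenate to an induced path.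
theorem PFree.pFreeFrom_or_pFreeFrom {m : ℕ} (hG : PFree G (2 * m + 1)) (u : V) {E F : Set V}
    (hEF : Anticomplete G E F) : PFreeFrom G m u E ∨ PFreeFrom G m u F := by
  by_contra! h
  simp only [PFreeFrom, not_not] at h
  obtain ⟨⟨f, ⟨hf, hfadj⟩, hfu, hfE⟩, g, ⟨hg, hgadj⟩, hgu, hgF⟩ := h
  let left (i : Fin (2 * m + 1)) : Fin (m + 1) := ⟨m - i, by omega⟩
  let right (i : Fin (2 * m + 1)) : Fin (m + 1) := ⟨i - m, by omega⟩
  refine hG ⟨fun i => if i.val ≤ m then f (left i) else g (right i),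
    isInducedPath_of_lt fun i j hij => ?_⟩
  rw [Fin.lt_def] at hij
  by_cases hj : j.val ≤ m
  · have hi : i.val ≤ m := by omega
    simp only [hi, hj, if_true, hf.ne_iff, hfadj, left, ne_eq, Fin.ext_iff]
    omega
  by_cases hi : i.val < m
  · simp only [hi.le, hj, if_true, if_false]
    have := hEF _ (hfE (left i) (by simp [left, Fin.ext_iff]; omega)) _
      (hgF (right j) (by simp [right, Fin.ext_iff]; omega))
    exact ⟨this.1, iff_of_false this.2 (by omega)⟩
  · have hleft : (if i.val ≤ m then f (left i) else g (right i)) = g (right i) := by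
      split_ifs with him
      · have hl : left i = 0 := by simp [left, Fin.ext_iff]; omega
        have hr : right i = 0 := by simp [right, Fin.ext_iff]; omega
        rw [hl, hr, hfu, hgu]
      · rfl
    simp only [hleft, hj, if_false, hg.ne_iff, hgadj, right, ne_eq, Fin.ext_iff]
    omega

theorem PFreeFrom.adj_or_adj (side : G.Coloring Bool) {u e₁ e₂ e₃ e₄ : V} {E : Set V}
    (h : PFreeFrom G 4 u E) (he₁ : e₁ ∈ E) (he₂ : e₂ ∈ E) (he₃ : e₃ ∈ E) (he₄ : e₄ ∈ E)
    (h₀₁ : G.Adj u e₁) (h₁₂ : G.Adj e₁ e₂) (h₂₃ : G.Adj e₂ e₃) (h₃₄ : G.Adj e₃ e₄) :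
    G.Adj u e₃ ∨ G.Adj e₁ e₄ := by
  by_contra! hcon
  obtain ⟨h₀₃, h₁₄⟩ := hcon
  have same {a b c : V} (hab : G.Adj a b) (hbc : G.Adj b c) : side a = side c :=
    bool_eq_of_ne_of_ne (side.valid hab) (side.valid hbc).symm
  have nadj {a b : V} (hab : side a = side b) : ¬ G.Adj a b := fun h => side.valid h hab
  have hside₀₂ := same h₀₁ h₁₂
  have hside₁₃ := same h₁₂ h₂₃
  have hside₂₄ := same h₂₃ h₃₄
  refine h ⟨![u, e₁, e₂, e₃, e₄], isInducedPath_of_lt ?_, rfl, ?_⟩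
  · have n₀₂ : u ≠ e₂ := by rintro rfl; exact h₀₃ h₂₃
    have n₁₃ : e₁ ≠ e₃ := by rintro rfl; exact h₁₄ h₃₄
    have n₂₄ : e₂ ≠ e₄ := by rintro rfl; exact h₁₄ h₁₂
    have n₀₄ : u ≠ e₄ := by rintro rfl; exact h₀₃ h₃₄.symm
    have n₀₃ : u ≠ e₃ := fun h => side.valid h₂₃ (hside₀₂.symm.trans (congrArg side h))
    have n₁₄ : e₁ ≠ e₄ := fun h => side.valid h₃₄ (hside₁₃.symm.trans (congrArg side h))
    simp [Fin.forall_fin_succ, *, h₀₁.ne, h₁₂.ne, h₂₃.ne, h₃₄.ne, nadj hside₀₂,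
      nadj hside₁₃, nadj hside₂₄, nadj (hside₀₂.trans hside₂₄)]
  · simp [Fin.forall_fin_succ, *]

end InducedPath

namespace ReachIn

variable {G : SimpleGraph ℕ} {S T : Set ℕ} {x y z : ℕ}

theorem mem_left (h : ReachIn G S x y) : x ∈ S := h.1

theorem mem_right (h : ReachIn G S x y) : y ∈ S := h.2.1

theorem refl (hx : x ∈ S) : ReachIn G S x x := ⟨hx, hx, .refl _⟩

theorem symm : ReachIn G S x y → ReachIn G S y x
  | ⟨hx, hy, h⟩ => ⟨hy, hx, h.symm⟩

theorem trans : ReachIn G S x y → ReachIn G S y z → ReachIn G S x z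
  | ⟨hx, _, h⟩, ⟨_, hz, h'⟩ => ⟨hx, hz, h.trans h'⟩

theorem of_adj (hx : x ∈ S) (hy : y ∈ S) (h : G.Adj x y) : ReachIn G S x y :=
  ⟨hx, hy, SimpleGraph.Adj.reachable (G := G.induce S) h⟩

theorem tail (h : ReachIn G S x y) (hz : z ∈ S) (hyz : G.Adj y z) : ReachIn G S x z :=
  h.trans (of_adj h.mem_right hz hyz)

@[elab_as_elim]
theorem induction {P : ℕ → Prop} (h : ReachIn G S x y) (base : P x)
    (step : ∀ a b, ReachIn G S x a → ReachIn G S x b → G.Adj a b → P a → P b) : P y := by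
  obtain ⟨hx, hy, h⟩ := h
  rw [SimpleGraph.reachable_iff_reflTransGen] at h
  suffices ∀ b : S, Relation.ReflTransGen (G.induce S).Adj ⟨x, hx⟩ b → ReachIn G S x b ∧ P b from
    (this _ h).2
  intro b hb
  induction hb with
  | refl => exact ⟨refl hx, base⟩
  | tail _ hbc ih =>
    have hreach := ih.1.tail (Subtype.prop _) hbc
    exact ⟨hreach, step _ _ ih.1 hreach hbc ih.2⟩

theorem mono (hST : S ⊆ T) (h : ReachIn G S x y) : ReachIn G T x y :=
  h.induction (refl (hST h.mem_left)) fun _ _ _ hb hab ih => ih.tail (hST hb.mem_right) hab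

@[elab_as_elim]
theorem induction_two_step (side : G.Coloring Bool) {P : ℕ → Prop} (h : ReachIn G S x y)
    (hy : side y = side x) (base : P x)
    (step : ∀ a m b, ReachIn G S x a → ReachIn G S x m → ReachIn G S x b →
      G.Adj a m → G.Adj m b → side a = side x → P a → P b) : P y := by
  have key : (side y = side x → P y) ∧
      (side y ≠ side x → ∃ a, ReachIn G S x a ∧ G.Adj a y ∧ side a = side x ∧ P a) := by
    refine h.induction ⟨fun _ => base, fun hne => absurd rfl hne⟩ ?_
    rintro m b hm hb hmb ⟨hsame, hopp⟩
    have hside := side.valid hmb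
    refine ⟨fun hbx => ?_, fun hbx => ?_⟩
    · obtain ⟨a, ha, ham, hax, hPa⟩ := hopp (hbx ▸ hside)
      exact step a m b ha hm hb ham hmb hax hPa
    · have hmx : side m = side x := bool_eq_of_ne_of_ne hside hbx.symm
      exact ⟨m, hm, hmb, hmx, hsame hmx⟩
  exact key.1 hy

theorem insert_self_iff {u : ℕ} :
    ReachIn G (insert u S) u y ↔ y = u ∨ ∃ f, G.Adj u f ∧ ReachIn G S f y := by
  refine ⟨fun h => ?_, ?_⟩
  · refine h.induction (Or.inl rfl) fun a b _ hb hab ih => ?_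
    obtain rfl | hbS := hb.mem_right
    · exact Or.inl rfl
    obtain rfl | ⟨f, huf, hfa⟩ := ih
    · exact Or.inr ⟨b, hab, refl hbS⟩
    · exact Or.inr ⟨f, huf, hfa.tail hbS hab⟩
  · rintro (rfl | ⟨f, huf, hfy⟩)
    · exact refl (Set.mem_insert _ _)
    · exact (of_adj (Set.mem_insert _ _) (Set.mem_insert_of_mem _ hfy.mem_left) huf).trans
        (hfy.mono (Set.subset_insert _ _))

theorem of_insert {u : ℕ} (h : ReachIn G (insert u S) x y) (hxu : ¬ ReachIn G (insert u S) x u) :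
    ReachIn G S x y := by
  have mem_of_reach : ∀ {a}, ReachIn G (insert u S) x a → a ∈ S := fun ha =>
    ha.mem_right.resolve_left fun hau => hxu (hau ▸ ha)
  exact h.induction (refl (mem_of_reach (refl h.mem_left)))
    fun a b _ hb hab ih => ih.tail (mem_of_reach hb) hab

end ReachIn

theorem evenReachIn_iff {G : SimpleGraph ℕ} (side : G.Coloring Bool) {S : Set ℕ} {x y : ℕ}
    (h : ReachIn G S x y) : EvenReachIn G S x y ↔ side x = side y := by
  let sideS : (G.induce S).Coloring Bool := side.comp (SimpleGraph.Embedding.induce S).toHom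
  have even_iff (hx : x ∈ S) (hy : y ∈ S) (p : (G.induce S).Walk ⟨x, hx⟩ ⟨y, hy⟩) :
      Even p.length ↔ side x = side y :=
    (sideS.even_length_iff_congr p).trans Bool.eq_iff_iff.symm
  refine ⟨fun ⟨hx, hy, p, hp⟩ => (even_iff hx hy p).1 hp, fun hxy => ?_⟩
  obtain ⟨hx, hy, ⟨p⟩⟩ := h
  exact ⟨hx, hy, p, (even_iff hx hy p).2 hxy⟩

/-- Vertex set of the connected component of `x` in the subgraph of `G` induced on `S`; it is empty
when `x ∉ S`. -/
def componentIn (G : SimpleGraph ℕ) (S : Set ℕ) (x : ℕ) : Set ℕ := {y | ReachIn G S x y}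

section componentIn

variable {G : SimpleGraph ℕ} {S T : Set ℕ} {x y : ℕ}

theorem anticomplete_componentIn (h : ¬ ReachIn G S x y) :
    Anticomplete G (componentIn G S x) (componentIn G S y) := by
  refine fun a ha b hb => ⟨?_, fun hab => h ((ha.tail hb.mem_right hab).trans hb.symm)⟩
  rintro rfl
  exact h (ha.trans hb.symm)

theorem ReachIn.componentIn (h : ReachIn G S x y) : ReachIn G (componentIn G S x) x y :=
  h.induction (.refl (.refl h.mem_left)) fun _ _ _ hb hab ih => ih.tail hb hab

end componentIn

namespace PFreeFrom

variable {G : SimpleGraph ℕ} {E S : Set ℕ} {u : ℕ}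

theorem exists_adj_adj (side : G.Coloring Bool) (hE : PFreeFrom G 4 u E) {f e : ℕ}
    (huf : G.Adj u f) (hfe : ReachIn G E f e) (he : side e = side u) :
    ∃ p ∈ E, G.Adj u p ∧ G.Adj p e := by
  have hue : ReachIn G (insert u E) u e := ReachIn.insert_self_iff.2 (Or.inr ⟨f, huf, hfe⟩)
  refine hue.induction_two_step side he ⟨f, hfe.mem_left, huf, huf.symm⟩ ?_
  rintro a m b ha hm hb ham hmb hau ⟨p, hp, hup, hpa⟩
  have hmE : m ∈ E := hm.mem_right.resolve_left (by rintro rfl; exact side.valid ham hau)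
  obtain rfl | hbE := hb.mem_right
  · exact ⟨p, hp, hup, hup.symm⟩
  obtain rfl | haE := ha.mem_right
  · exact ⟨m, hmE, ham, hmb⟩
  obtain hum | hpb := hE.adj_or_adj side hp haE hmE hbE hup hpa ham hmb
  · exact ⟨m, hmE, hum, hmb⟩
  · exact ⟨p, hp, hup, hpb⟩

theorem exists_adj_of_forall_exists_not_adj (side : G.Coloring Bool) (hE : PFreeFrom G 4 u E)
    {f c : ℕ} (huf : G.Adj u f) (hfc : ReachIn G E f c) (hc : side c = side u)
    (hcE : componentIn G S c ⊆ E)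
    (hnot : ∀ p ∈ E, ∃ z, ReachIn G S c z ∧ side z = side u ∧ ¬ G.Adj p z) :
    ∃ q, ReachIn G S c q ∧ G.Adj u q := by
  by_contra! hcon
  obtain ⟨p, hp, hup, hpc⟩ := hE.exists_adj_adj side huf hfc hc
  obtain ⟨z, hcz, hz, hpz⟩ := hnot p hp
  refine hpz (hcz.induction_two_step side (hz.trans hc.symm) hpc ?_)
  intro a m b ha hm hb ham hmb _ hpa
  exact (hE.adj_or_adj side hp (hcE ha) (hcE hm) (hcE hb) hup hpa ham hmb).resolve_left (hcon m hm)

theorem adj_of_adj_component (side : G.Coloring Bool) (hE : PFreeFrom G 4 u E) {w q g₁ g₂ : ℕ}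
    (hw : side w ≠ side u) (hwE : componentIn G (insert w S) w ⊆ E)
    (hwq : ReachIn G (insert w S) w q) (huq : G.Adj u q)
    (hwg₁ : G.Adj w g₁) (hwg₂ : G.Adj w g₂) (hg₁ : g₁ ∈ S) (hg₂ : g₂ ∈ S)
    (hg : ¬ ReachIn G S g₁ g₂) : G.Adj u w := by
  obtain rfl | ⟨g, hwg, hgq⟩ := ReachIn.insert_self_iff.1 hwq
  · exact huq
  have mem_E {z y : ℕ} (hwz : G.Adj w z) (hzy : ReachIn G S z y) : y ∈ E :=
    hwE (ReachIn.insert_self_iff.2 (Or.inr ⟨z, hwz, hzy⟩))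
  obtain ⟨g', hwg', hg', hgg'⟩ : ∃ g', G.Adj w g' ∧ g' ∈ S ∧ ¬ ReachIn G S g g' := by
    by_cases hgg₁ : ReachIn G S g g₁
    · exact ⟨g₂, hwg₂, hg₂, fun hgg₂ => hg (hgg₁.symm.trans hgg₂)⟩
    · exact ⟨g₁, hwg₁, hg₁, hgg₁⟩
  have hside : side g = side u := bool_eq_of_ne_of_ne (side.valid hwg).symm hw.symm
  have hcomp : PFreeFrom G 4 u (componentIn G S q) := hE.mono fun y hy => mem_E hwg (hgq.trans hy)
  obtain ⟨p, hqp, hup, hpg⟩ := hcomp.exists_adj_adj side huq hgq.symm.componentIn hside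
  have hgp : ReachIn G S g p := hgq.trans hqp
  refine (hE.adj_or_adj side (mem_E hwg hgp) (mem_E hwg (.refl hgq.mem_left))
    (hwE (.refl (Set.mem_insert _ _))) (mem_E hwg' (.refl hg')) hup hpg hwg.symm hwg').resolve_right
    fun hpg' => hgg' (hgp.tail hg' hpg')

end PFreeFrom

section XGraph

theorem xSide_xRoot : ∀ k, XSide k (XRoot k) = true
  | 0 | 1 | 2 | _ + 3 => rfl

theorem exists_xSide_eq_false : ∀ n, ∃ x, XSide (n + 2) x = false
  | 0 => ⟨false, rfl⟩
  | n + 1 =>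
    have ⟨x, hx⟩ := exists_xSide_eq_false n
    ⟨some (Sum.inr x), hx⟩

/-- The map on `X_{n+3}` sending the root to `p` and restricting to `f₁` and `f₂` on the two copies
of `X_{n+2}`. -/
def xGlue {V : Type*} {n : ℕ} (p : V) (f₁ f₂ : XV (n + 2) → V) : XV (n + 3) → V
  | none => p
  | some (Sum.inl x) => f₁ x
  | some (Sum.inr x) => f₂ x

variable {V : Type*} {G : SimpleGraph V}

theorem xGlue_injective {n : ℕ} {p : V} {f₁ f₂ : XV (n + 2) → V} (h₁ : Function.Injective f₁)
    (h₂ : Function.Injective f₂) (hp₁ : ∀ x, p ≠ f₁ x) (hp₂ : ∀ x, p ≠ f₂ x)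
    (h₁₂ : ∀ x y, f₁ x ≠ f₂ y) : Function.Injective (xGlue p f₁ f₂) := by
  rintro (_ | x | x) (_ | y | y) hxy
  · rfl
  · exact absurd hxy (hp₁ y)
  · exact absurd hxy (hp₂ y)
  · exact absurd hxy.symm (hp₁ x)
  · rw [h₁ hxy]
  · exact absurd hxy (h₁₂ x y)
  · exact absurd hxy.symm (hp₂ x)
  · exact absurd hxy.symm (h₁₂ y x)
  · rw [h₂ hxy]

theorem adj_xGlue_iff {n : ℕ} {p : V} {e₁ e₂ : XGraph (n + 2) ↪g G}
    (h₁₂ : ∀ x y, ¬ G.Adj (e₁ x) (e₂ y))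
    (hp₁ : ∀ x, G.Adj p (e₁ x) ↔ XSide (n + 2) x = true)
    (hp₂ : ∀ x, G.Adj p (e₂ x) ↔ XSide (n + 2) x = false) (x y : XV (n + 3)) :
    G.Adj (xGlue p e₁ e₂ x) (xGlue p e₁ e₂ y) ↔ (XGraph (n + 3)).Adj x y := by
  have adj₁ x y : G.Adj (e₁ x) (e₁ y) ↔ x ≠ y ∧ (XRel (n + 2) x y ∨ XRel (n + 2) y x) :=
    e₁.map_adj_iff
  have adj₂ x y : G.Adj (e₂ x) (e₂ y) ↔ x ≠ y ∧ (XRel (n + 2) x y ∨ XRel (n + 2) y x) :=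
    e₂.map_adj_iff
  change Option (XV (n + 2) ⊕ XV (n + 2)) at x y
  change _ ↔ x ≠ y ∧ (XRel (n + 3) x y ∨ XRel (n + 3) y x)
  rcases x with _ | x | x <;> rcases y with _ | y | y <;>
    simp [xGlue, XRel, *, G.adj_comm _ p, G.adj_comm (e₂ _) (e₁ _)]

/-- The set `S` contains an induced copy of `X_k` in `G` whose root side has color `r`. -/
def ContainsX (side : G.Coloring Bool) (k : ℕ) (S : Set V) (r : Bool) : Prop :=
  ∃ e : XGraph k ↪g G, ∀ x, e x ∈ S ∧ side (e x) = (XSide k x == r)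

variable {side : G.Coloring Bool} {S T : Set V}

theorem ContainsX.mono {k : ℕ} {r : Bool} (h : ContainsX side k S r) (hST : S ⊆ T) :
    ContainsX side k T r :=
  have ⟨e, he⟩ := h
  ⟨e, fun x => ⟨hST (he x).1, (he x).2⟩⟩

theorem containsX_one {u : V} (hu : u ∈ S) : ContainsX side 1 S (side u) :=
  ⟨⟨⟨fun _ => u, fun _ _ _ => rfl⟩, by
    intro x y
    obtain rfl : x = y := rfl
    simp⟩, fun _ => ⟨hu, (Bool.true_beq _).symm⟩⟩

theorem containsX_two {u w : V} (hu : u ∈ S) (hw : w ∈ S) (huw : G.Adj u w) :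
    ContainsX side 2 S (side u) := by
  let f (b : Bool) : V := if b then u else w
  have hf : Function.Injective f := by
    rintro (_ | _) (_ | _) <;> simp [f, huw.ne, huw.ne']
  refine ⟨⟨⟨f, hf⟩, ?_⟩, ?_⟩
  · intro x y
    change Bool at x y
    change G.Adj (f x) (f y) ↔ x ≠ y ∧ (x ≠ y ∨ y ≠ x)
    rcases x with _ | _ <;> rcases y with _ | _ <;> simp [f, huw, huw.symm]
  · rintro (_ | _)
    · exact ⟨hw, (Bool.eq_not.2 (side.valid huw).symm).trans (Bool.false_beq _).symm⟩
    · exact ⟨hu, (Bool.true_beq _).symm⟩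

theorem containsX_insert_union {n : ℕ} {p : V} (hS : ContainsX side (n + 2) S (!side p))
    (hT : ContainsX side (n + 2) T (side p)) (hST : Anticomplete G S T)
    (hp : ∀ x ∈ S ∪ T, side x ≠ side p → G.Adj p x) :
    ContainsX side (n + 3) (insert p (S ∪ T)) (side p) := by
  obtain ⟨e₁, he₁⟩ := hS
  obtain ⟨e₂, he₂⟩ := hT
  have adj_iff {x : V} (hx : x ∈ S ∪ T) : G.Adj p x ↔ side x ≠ side p :=
    ⟨fun h => (side.valid h).symm, hp x hx⟩
  have hp₁ x : G.Adj p (e₁ x) ↔ XSide (n + 2) x = true := by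
    rw [adj_iff (Or.inl (he₁ x).1), (he₁ x).2]
    cases XSide (n + 2) x <;> cases side p <;> decide
  have hp₂ x : G.Adj p (e₂ x) ↔ XSide (n + 2) x = false := by
    rw [adj_iff (Or.inr (he₂ x).1), (he₂ x).2]
    cases XSide (n + 2) x <;> cases side p <;> decide
  have h₁₂ x y := hST _ (he₁ x).1 _ (he₂ y).1
  have hne₁ : ∀ x, p ≠ e₁ x := by
    rintro x rfl
    obtain ⟨y, hy⟩ := exists_xSide_eq_false n
    exact (h₁₂ x y).2 ((hp₂ y).2 hy)
  have hne₂ : ∀ x, p ≠ e₂ x := by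
    rintro x rfl
    exact (h₁₂ _ x).2 ((hp₁ _).2 (xSide_xRoot (n + 2))).symm
  refine ⟨⟨⟨xGlue p e₁ e₂, xGlue_injective e₁.injective e₂.injective hne₁ hne₂ fun x y =>
    (h₁₂ x y).1⟩, adj_xGlue_iff (fun x y => (h₁₂ x y).2) hp₁ hp₂ _ _⟩, ?_⟩
  rintro (_ | x | x)
  · exact ⟨Or.inl rfl, (Bool.true_beq _).symm⟩
  · refine ⟨Or.inr (Or.inl (he₁ x).1), (he₁ x).2.trans ?_⟩
    cases h : XSide (n + 2) x <;> simp [XSide, h]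
  · exact ⟨Or.inr (Or.inr (he₂ x).1), (he₂ x).2⟩

end XGraph

section Algorithm

variable {G : SimpleGraph ℕ} (side : G.Coloring Bool) {t i j k u v x y : ℕ}

theorem algoColAux_of_lt (h : u < t) : algoColAux G t u = algoCol G u := by
  induction t, h using Nat.le_induction with
  | base => rfl
  | succ t hut ih => exact (if_neg (Nat.ne_of_lt hut)).trans ih

theorem algoColAux_of_le (h : t ≤ u) : algoColAux G t u = PalColor.a 0 := by
  induction t with
  | zero => rfl
  | succ t ih => exact (if_neg (Nat.ne_of_gt h)).trans (ih (Nat.le_of_succ_le h))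

theorem algoCol_eq_step (G : SimpleGraph ℕ) (t : ℕ) :
    algoCol G t = step G (algoColAux G t) t :=
  if_pos rfl

theorem algoColAux_eq_iff {c : PalColor} (hc : c ≠ PalColor.a 0) :
    algoColAux G t u = c ↔ u < t ∧ algoCol G u = c := by
  obtain h | h := lt_or_ge u t
  · rw [algoColAux_of_lt h, and_iff_right h]
  · rw [algoColAux_of_le h]
    exact iff_of_false hc.symm fun h' => h.not_gt h'.1

theorem index_algoCol (G : SimpleGraph ℕ) (t : ℕ) :
    (algoCol G t).index = mIdx G (algoColAux G t) t := by
  rw [algoCol_eq_step, step]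
  split_ifs <;> rfl

theorem one_le_index_algoCol (G : SimpleGraph ℕ) (t : ℕ) : 1 ≤ (algoCol G t).index :=
  (index_algoCol G t).symm ▸ Nat.le_add_left 1 _

theorem hasColorIndex.index_eq {col : ℕ → PalColor} (h : hasColorIndex col u j) :
    (col u).index = j := by
  rcases h with h | h <;> rw [h] <;> rfl

/-- The vertices presented before time `t` to which Algorithm 1 gives a color of index at most
`i`. -/
def presented (G : SimpleGraph ℕ) (t i : ℕ) : Set ℕ := {w | w < t ∧ (algoCol G w).index ≤ i}

theorem presented_mono {s : ℕ} (hst : s ≤ t) (hij : i ≤ j) : presented G s i ⊆ presented G t j :=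
  fun _ hw => ⟨hw.1.trans_le hst, hw.2.trans hij⟩

theorem presented_succ_of_index_le (h : (algoCol G t).index ≤ i) :
    presented G (t + 1) i = insert t (presented G t i) := by
  ext w
  simp only [presented, Set.mem_ofPred_eq, Set.mem_insert_iff, Nat.lt_succ_iff_lt_or_eq]
  grind

theorem presented_succ_of_lt_index (h : i < (algoCol G t).index) :
    presented G (t + 1) i = presented G t i := by
  ext w
  simp only [presented, Set.mem_ofPred_eq, Nat.lt_succ_iff_lt_or_eq]
  grind

theorem domSet_algoCol (G : SimpleGraph ℕ) (t i u : ℕ) :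
    domSet (algoCol G) t i u = insert u (presented G t i) := by
  ext w
  simp only [domSet, presented, one_le_index_algoCol, true_and, Set.mem_ofPred_eq,
    Set.mem_insert_iff, or_comm]

theorem domSet_algoColAux (G : SimpleGraph ℕ) (t i u : ℕ) :
    domSet (algoColAux G t) t i u = insert u (presented G t i) := by
  rw [← domSet_algoCol]
  ext w
  simp only [domSet, Set.mem_ofPred_eq]
  refine or_congr_left (and_congr_right fun hw => ?_)
  rw [algoColAux_of_lt hw]

/-- The component `C_i[u]` at time `t` for the coloring produced by Algorithm 1. -/
def algoComp (G : SimpleGraph ℕ) (t i u : ℕ) : Set ℕ :=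
  componentIn G (insert u (presented G t i)) u

theorem comp_algoCol (G : SimpleGraph ℕ) (t i u : ℕ) :
    comp G (algoCol G) t i u = algoComp G t i u := by
  rw [comp, domSet_algoCol, algoComp, componentIn]

theorem comp_algoColAux (G : SimpleGraph ℕ) (t i u : ℕ) :
    comp G (algoColAux G t) t i u = algoComp G t i u := by
  rw [comp, domSet_algoColAux, algoComp, componentIn]

theorem self_mem_algoComp : u ∈ algoComp G t i u := .refl (Set.mem_insert _ _)

theorem mem_algoComp_iff :
    x ∈ algoComp G t i u ↔ x = u ∨ ∃ f, G.Adj u f ∧ ReachIn G (presented G t i) f x :=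
  ReachIn.insert_self_iff

theorem algoComp_subset_componentIn {S : Set ℕ} (hS : presented G t i ⊆ S)
    (h : ReachIn G S x u) : algoComp G t i u ⊆ componentIn G S x :=
  fun _ hy => h.trans (hy.mono (Set.insert_subset h.mem_right hS))

theorem univTo_algoColAux_iff {p : ℕ} :
    UnivTo G (algoColAux G t) t j u p ↔ UnivTo G (algoCol G) t j u p := by
  simp only [UnivTo, comp_algoCol, comp_algoColAux, domSet_algoCol, domSet_algoColAux]

theorem univTo_iff {p : ℕ} : UnivTo G (algoCol G) t j u p ↔
    ∃ b, ∀ x ∈ algoComp G t (j - 1) u, side x = b → G.Adj p x := by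
  have even_iff {x : ℕ} (hx : x ∈ algoComp G t (j - 1) u) :
      EvenReachIn G (insert u (presented G t (j - 1))) u x ↔ side x = side u :=
    (evenReachIn_iff side hx).trans eq_comm
  simp only [UnivTo, comp_algoCol, domSet_algoCol]
  constructor
  · rintro (h | h)
    · exact ⟨side u, fun x hx hxu => h x hx ((even_iff hx).2 hxu)⟩
    · exact ⟨!side u, fun x hx hxu => h x hx ((even_iff hx).not.2 (Bool.eq_not.1 hxu))⟩
  · rintro ⟨b, h⟩
    by_cases hb : b = side u
    · exact Or.inl fun x hx hxu => h x hx (((even_iff hx).1 hxu).trans hb.symm)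
    · exact Or.inr fun x hx hxu =>
        h x hx (bool_eq_of_ne_of_ne ((even_iff hx).not.1 hxu) hb)

theorem mixedA_algoColAux_iff (hi : 1 ≤ i) : MixedA G (algoColAux G t) t i ↔
    ∃ x ∈ algoComp G t i t, ∃ y ∈ algoComp G t i t, (x < t ∧ algoCol G x = PalColor.a i) ∧
      (y < t ∧ algoCol G y = PalColor.a i) ∧ side x ≠ side y := by
  have ha : PalColor.a i ≠ PalColor.a 0 := fun h => by injection h; omega
  simp only [MixedA, comp_algoColAux, domSet_algoColAux, algoColAux_eq_iff ha]
  refine exists_congr fun x => and_congr_right fun hx => exists_congr fun y =>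
    and_congr_right fun hy => ?_
  rw [evenReachIn_iff side (hx.symm.trans hy)]

theorem bddAbove_mixedA (G : SimpleGraph ℕ) (t : ℕ) :
    BddAbove {i | 1 ≤ i ∧ MixedA G (algoColAux G t) t i} := by
  refine ⟨∑ w ∈ Finset.range t, (algoCol G w).index, ?_⟩
  rintro i ⟨hi, x, -, -, -, hx, -⟩
  have ha : PalColor.a i ≠ PalColor.a 0 := fun h => by injection h; omega
  obtain ⟨hxt, hx⟩ := (algoColAux_eq_iff ha).1 hx
  calc i = (algoCol G x).index := by rw [hx, PalColor.index]
    _ ≤ _ := Finset.single_le_sum_of_canonicallyOrdered (f := fun w => (algoCol G w).index)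
      (Finset.mem_range.2 hxt)

theorem not_mixedA_of_index_le (hi : (algoCol G t).index ≤ i) :
    ¬ MixedA G (algoColAux G t) t i := by
  intro h
  have hle : i ≤ sSup {i | 1 ≤ i ∧ MixedA G (algoColAux G t) t i} :=
    le_csSup (bddAbove_mixedA G t) ⟨(one_le_index_algoCol G t).trans hi, h⟩
  rw [index_algoCol, mIdx] at hi
  omega

theorem mixedA_of_index_eq_succ (hj : 1 ≤ j) (ht : (algoCol G t).index = j + 1) :
    MixedA G (algoColAux G t) t j := by
  rw [index_algoCol, mIdx, Nat.add_right_cancel_iff] at ht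
  have hne : {i | 1 ≤ i ∧ MixedA G (algoColAux G t) t i}.Nonempty := by
    refine Set.nonempty_iff_ne_empty.2 fun h => ?_
    rw [h, csSup_empty, bot_eq_zero] at ht
    omega
  exact (ht ▸ Nat.sSup_mem hne (bddAbove_mixedA G t)).2

/-- The threshold `j ≥ k - √(2k) + 2` that Algorithm 1 puts on the color index `j` of `u` when it
tests whether some vertex universal to `C_{j-1}[u]` forces the color `c_k`. -/
def AboveThreshold (k j : ℕ) : Prop := (k : ℝ) - Real.sqrt (2 * k) + 2 ≤ j

theorem AboveThreshold.pos (h : AboveThreshold k j) : 0 < j := by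
  have hsqrt : Real.sqrt (2 * k) < k + 2 :=
    (Real.sqrt_lt' (by positivity)).2 (by nlinarith [sq_nonneg (k : ℝ)])
  have hj : (0 : ℝ) < j := by unfold AboveThreshold at h; linarith
  exact_mod_cast hj

/-- Vertices `u` and `p` of `C_k[t]` such that `u` was presented before `t` and has color index
`j`, and `p` is universal to `C_{j-1}[u]`. -/
structure UniversalPair (G : SimpleGraph ℕ) (t k j u p : ℕ) : Prop where
  lt : u < t
  mem : u ∈ algoComp G t k t
  mem_universal : p ∈ algoComp G t k t
  colorIndex : hasColorIndex (algoCol G) u j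
  univTo : UnivTo G (algoCol G) t j u p

theorem exists_opposite_algoColAux_iff {c : PalColor} (hc : c ≠ PalColor.a 0) :
    (∃ u ∈ {x ∈ algoComp G t k t | ¬ EvenReachIn G (insert t (presented G t k)) t x},
      algoColAux G t u = c) ↔
    ∃ u ∈ algoComp G t k t, side u ≠ side t ∧ u < t ∧ algoCol G u = c := by
  simp only [algoColAux_eq_iff hc, Set.mem_ofPred_eq, and_assoc]
  refine exists_congr fun u => and_congr_right fun hu => ?_
  rw [evenReachIn_iff side hu, ne_comm, ne_eq]

theorem exists_opposite_universal_iff :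
    (∃ u ∈ {x ∈ algoComp G t k t | EvenReachIn G (insert t (presented G t k)) t x} ∪
        {x ∈ algoComp G t k t | ¬ EvenReachIn G (insert t (presented G t k)) t x},
      ∃ p ∈ {x ∈ algoComp G t k t | ¬ EvenReachIn G (insert t (presented G t k)) t x},
      ∃ j : ℕ, hasColorIndex (algoColAux G t) u j ∧
        (k : ℝ) - Real.sqrt (2 * k) + 2 ≤ j ∧ UnivTo G (algoColAux G t) t j u p) ↔
    ∃ j u p, AboveThreshold k j ∧ UniversalPair G t k j u p ∧ side p ≠ side t := by
  constructor
  · rintro ⟨u, hu, p, ⟨hp, hpt⟩, j, huj, hkj, hup⟩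
    rw [evenReachIn_iff side hp] at hpt
    have hj : j ≠ 0 := AboveThreshold.pos hkj |>.ne'
    simp only [hasColorIndex, algoColAux_eq_iff (show PalColor.a j ≠ .a 0 by simpa using hj),
      algoColAux_eq_iff (show PalColor.b j ≠ .a 0 by simp), ← and_or_left] at huj
    exact ⟨j, u, p, hkj, ⟨huj.1, hu.elim And.left And.left, hp, huj.2,
      univTo_algoColAux_iff.1 hup⟩, Ne.symm hpt⟩
  · rintro ⟨j, u, p, hkj, h, hpt⟩
    refine ⟨u, ?_, p, ⟨h.mem_universal, ?_⟩, j, ?_, hkj, univTo_algoColAux_iff.2 h.univTo⟩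
    · exact (em _).imp (And.intro h.mem) (And.intro h.mem)
    · rw [evenReachIn_iff side h.mem_universal]
      exact hpt.symm
    · simpa only [hasColorIndex, algoColAux_of_lt h.lt] using h.colorIndex

open Classical in
theorem algoCol_eq_ite (hk : (algoCol G t).index = k) : algoCol G t =
    if ∃ u ∈ algoComp G t k t, side u ≠ side t ∧ u < t ∧ algoCol G u = PalColor.a k then
      PalColor.b k
    else if ∃ u ∈ algoComp G t k t, side u ≠ side t ∧ u < t ∧ algoCol G u = PalColor.c k then
      PalColor.a k
    else if ∃ j u p, AboveThreshold k j ∧ UniversalPair G t k j u p ∧ side p ≠ side t then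
      PalColor.c k
    else PalColor.a k := by
  have hk₁ : 1 ≤ k := hk ▸ one_le_index_algoCol G t
  have ha : PalColor.a k ≠ PalColor.a 0 := fun h => by injection h; omega
  rw [index_algoCol] at hk
  rw [algoCol_eq_step, step]
  simp only [hk, comp_algoColAux, domSet_algoColAux, exists_opposite_universal_iff side,
    exists_opposite_algoColAux_iff side ha,
    exists_opposite_algoColAux_iff side (show PalColor.c k ≠ PalColor.a 0 by simp)]

theorem algoCol_ne_of_opposite (ht : algoCol G t = PalColor.a k) (hu : u ∈ algoComp G t k t)
    (hut : u < t) (hside : side u ≠ side t) : algoCol G u ≠ PalColor.a k := by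
  intro hcol
  rw [algoCol_eq_ite side (congrArg PalColor.index ht), if_pos ⟨u, hu, hside, hut, hcol⟩] at ht
  cases ht

theorem exists_universalPair_of_color_c (ht : algoCol G t = PalColor.c k) :
    ∃ j u p, AboveThreshold k j ∧ UniversalPair G t k j u p ∧ side p ≠ side t := by
  rw [algoCol_eq_ite side (congrArg PalColor.index ht)] at ht
  split_ifs at ht with _ _ h
  exact h

-- If `v` escapes the color `c_k` only because of an opposite vertex colored `c_k`, that vertex
-- supplies a universal vertex on the side of `v`.
theorem exists_universalPair_or_forall_not (hv : algoCol G v = PalColor.a k) :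
    (∃ t ≤ v, t ∈ algoComp G v k v ∧
      ∃ j u p, AboveThreshold k j ∧ UniversalPair G t k j u p ∧ side p = side v) ∨
    ∀ j u p, AboveThreshold k j → ¬ UniversalPair G v k j u p := by
  by_contra! ⟨hsame, j, u, p, hkj, hup⟩
  have hpv : side p ≠ side v := hsame v le_rfl self_mem_algoComp j u p hkj hup
  have hite := hv
  rw [algoCol_eq_ite side (congrArg PalColor.index hv)] at hite
  split_ifs at hite with _ hc hpair
  · obtain ⟨t, htv, hside, hlt, ht⟩ := hc
    obtain ⟨j', u', p', hkj', hup', hp't⟩ := exists_universalPair_of_color_c side ht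
    exact hsame t hlt.le htv j' u' p' hkj' hup' (bool_eq_of_ne_of_ne hp't hside.symm)
  · exact hpair ⟨j, u, p, hkj, hup, hpv⟩

theorem side_eq_of_mem_algoComp (ht : (algoCol G t).index ≤ i) (hx : x ∈ algoComp G t i t)
    (hy : y ∈ algoComp G t i t) (hcx : algoCol G x = PalColor.a i)
    (hcy : algoCol G y = PalColor.a i) : side x = side y := by
  have lt_or_eq {z : ℕ} (hz : z ∈ algoComp G t i t) : z = t ∨ z < t :=
    hz.mem_right.imp_right And.left
  by_contra hxy
  obtain rfl | hxt := lt_or_eq hx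
  · have hyx : y < x := (lt_or_eq hy).resolve_left fun h => hxy (congrArg side h.symm)
    exact algoCol_ne_of_opposite side hcx hy hyx (Ne.symm hxy) hcy
  obtain rfl | hyt := lt_or_eq hy
  · exact algoCol_ne_of_opposite side hcy hx hxt hxy hcx
  have hi : 1 ≤ i := (one_le_index_algoCol G t).trans ht
  exact not_mixedA_of_index_le ht ((mixedA_algoColAux_iff side hi).2
    ⟨x, hx, y, hy, ⟨hxt, hcx⟩, ⟨hyt, hcy⟩, hxy⟩)

theorem side_eq_of_reachIn_presented (hxy : ReachIn G (presented G t i) x y)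
    (hx : algoCol G x = PalColor.a i) (hy : algoCol G y = PalColor.a i) : side x = side y := by
  induction t with
  | zero => exact absurd hxy.mem_left.1 (Nat.not_lt_zero x)
  | succ t ih =>
    obtain hti | hti := le_or_gt (algoCol G t).index i
    · rw [presented_succ_of_index_le hti] at hxy
      by_cases hxt : ReachIn G (insert t (presented G t i)) x t
      · exact side_eq_of_mem_algoComp side hti hxt.symm (hxt.symm.trans hxy) hx hy
      · exact ih (hxy.of_insert hxt)
    · exact ih (presented_succ_of_lt_index hti ▸ hxy)

theorem exists_lt_color_a_of_index_eq_succ (hj : 1 ≤ j) (hut : u ≤ t)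
    (hu : (algoCol G u).index = j + 1) (b : Bool) :
    ∃ x < u, algoCol G x = PalColor.a j ∧ side x = b ∧
      ∃ f, G.Adj u f ∧ ReachIn G (presented G t j) f x := by
  obtain ⟨x, hx, y, hy, ⟨hxu, hcx⟩, ⟨hyu, hcy⟩, hxy⟩ :=
    (mixedA_algoColAux_iff side hj).1 (mixedA_of_index_eq_succ hj hu)
  have reach {z : ℕ} (hz : z ∈ algoComp G u j u) (hzu : z < u) :
      ∃ f, G.Adj u f ∧ ReachIn G (presented G t j) f z := by
    obtain ⟨f, huf, hfz⟩ := (mem_algoComp_iff.1 hz).resolve_left hzu.ne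
    exact ⟨f, huf, hfz.mono (presented_mono hut le_rfl)⟩
  by_cases hxb : side x = b
  · exact ⟨x, hxu, hcx, hxb, reach hx hxu⟩
  · exact ⟨y, hyu, hcy, bool_eq_of_ne_of_ne hxy.symm (Ne.symm hxb), reach hy hyu⟩

end Algorithm

section ContainsX

variable {G : SimpleGraph ℕ} (side : G.Coloring Bool) {j k t u v : ℕ}

theorem not_reachIn_presented_of_side_ne {x y : ℕ} (hx : algoCol G x = PalColor.a j)
    (hy : algoCol G y = PalColor.a j) (hxy : side x ≠ side y) : ¬ ReachIn G (presented G t j) x y :=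
  fun h => hxy (side_eq_of_reachIn_presented side h hx hy)

theorem containsX_insert_of_forall_exists_color_a {n p : ℕ} {D : Set ℕ}
    (hD : ∀ b, ∃ x, algoCol G x = PalColor.a j ∧ side x = b ∧
      ContainsX side (n + 2) (componentIn G (presented G t j) x ∩ D) b)
    (hp : ∀ x ∈ D, side x ≠ side p → G.Adj p x) :
    ContainsX side (n + 3) (insert p D) (side p) := by
  obtain ⟨x, hx, hxp, hX⟩ := hD (!side p)
  obtain ⟨y, hy, hyp, hY⟩ := hD (side p)
  have hxy : side x ≠ side y := by rw [hxp, hyp]; exact Bool.not_ne_self _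
  have hanti := anticomplete_componentIn (not_reachIn_presented_of_side_ne side (t := t) hx hy hxy)
  have hsub : componentIn G (presented G t j) x ∩ D ∪ componentIn G (presented G t j) y ∩ D ⊆ D :=
    Set.union_subset Set.inter_subset_right Set.inter_subset_right
  exact (containsX_insert_union hX hY (hanti.mono Set.inter_subset_left Set.inter_subset_left)
    fun z hz => hp z (hsub hz)).mono (Set.insert_subset_insert hsub)

theorem containsX_insert_of_univTo {n p : ℕ} (hj : 1 ≤ j) (hut : u < t)
    (hu : (algoCol G u).index = j + 1) (hup : UnivTo G (algoCol G) t (j + 1) u p)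
    (hX : ∀ z, algoCol G z = PalColor.a j → ContainsX side (n + 2) (algoComp G z j z) (side z)) :
    ContainsX side (n + 3) (insert p (algoComp G t j u)) (side p) := by
  obtain ⟨b, hb⟩ := (univTo_iff side).1 hup
  have exists_child := exists_lt_color_a_of_index_eq_succ side hj hut.le hu
  have component_subset {f x : ℕ} (huf : G.Adj u f) (hfx : ReachIn G (presented G t j) f x) :
      componentIn G (presented G t j) x ⊆ algoComp G t j u :=
    fun y hxy => mem_algoComp_iff.2 (Or.inr ⟨f, huf, hfx.trans hxy⟩)
  have hbp : b ≠ side p := by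
    obtain ⟨x, -, -, rfl, f, huf, hfx⟩ := exists_child b
    exact (side.valid (hb x (component_subset huf hfx (.refl hfx.mem_right)) rfl)).symm
  refine containsX_insert_of_forall_exists_color_a (j := j) (t := t) side (fun c => ?_)
    fun x hx hxp => hb x hx (bool_eq_of_ne_of_ne hxp hbp)
  obtain ⟨x, -, hx, rfl, f, huf, hfx⟩ := exists_child c
  have hsub := algoComp_subset_componentIn (presented_mono hfx.mem_right.1.le le_rfl)
    (.refl hfx.mem_right)
  exact ⟨x, hx, rfl, (hX x hx).mono
    (Set.subset_inter hsub (hsub.trans (component_subset huf hfx)))⟩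

theorem exists_pFreeFrom_component (side : G.Coloring Bool) (hP9 : PFree G 9) (hj : 1 ≤ j)
    (hut : u ≤ t) (hu : (algoCol G u).index = j + 1) :
    ∃ f z, algoCol G z = PalColor.a j ∧ G.Adj u f ∧ ReachIn G (presented G t j) f z ∧
      PFreeFrom G 4 u (componentIn G (presented G t j) f) := by
  obtain ⟨x, -, hx, hxb, f, huf, hfx⟩ := exists_lt_color_a_of_index_eq_succ side hj hut hu true
  obtain ⟨y, -, hy, hyb, g, hug, hgy⟩ := exists_lt_color_a_of_index_eq_succ side hj hut hu false
  have hxy : side x ≠ side y := by simp [hxb, hyb]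
  have hfg : ¬ ReachIn G (presented G t j) f g := fun hfg =>
    not_reachIn_presented_of_side_ne side hx hy hxy (hfx.symm.trans (hfg.trans hgy))
  obtain hf | hg := PFree.pFreeFrom_or_pFreeFrom (m := 4) hP9 u (anticomplete_componentIn hfg)
  · exact ⟨f, x, hx, huf, hfx, hf⟩
  · exact ⟨g, y, hy, hug, hgy, hg⟩

theorem adj_of_forall_not_univTo {f i h w : ℕ}
    (hE : PFreeFrom G 4 u (componentIn G (presented G t i) f)) (huf : G.Adj u f)
    (hfw : ReachIn G (presented G t i) f w) (hh : 1 ≤ h) (hw : (algoCol G w).index = h + 1)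
    (hnot : ∀ p, ReachIn G (presented G t i) f p → ¬ UnivTo G (algoCol G) t (h + 1) w p)
    (hwu : side w ≠ side u) : G.Adj u w := by
  have hhi : h + 1 ≤ i := hw ▸ hfw.mem_right.2
  have hsub : algoComp G t h w ⊆ componentIn G (presented G t i) f :=
    algoComp_subset_componentIn (presented_mono le_rfl (by omega)) hfw
  have exists_child := exists_lt_color_a_of_index_eq_succ side hh hfw.mem_right.1.le hw
  obtain ⟨x, -, hx, hxu, g₁, hwg₁, hg₁x⟩ := exists_child (side u)
  obtain ⟨y, -, hy, hyu, g₂, hwg₂, hg₂y⟩ := exists_child (!side u)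
  have hxy : side x ≠ side y := by rw [hxu, hyu]; exact (Bool.not_ne_self _).symm
  have hwx : x ∈ algoComp G t h w := mem_algoComp_iff.2 (Or.inr ⟨g₁, hwg₁, hg₁x⟩)
  obtain ⟨q, hxq, huq⟩ := hE.exists_adj_of_forall_exists_not_adj side
      (S := insert w (presented G t h)) huf (hsub hwx).componentIn hxu
      (fun y hy => hsub (hwx.trans hy)) fun p hp => by
    have hp := hnot p hp
    rw [univTo_iff side] at hp
    push Not at hp
    obtain ⟨z, hz, hzu, hpz⟩ := hp (side u)
    exact ⟨z, hwx.symm.trans hz, hzu, hpz⟩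
  exact hE.adj_of_adj_component side hwu hsub (hwx.trans hxq) huq hwg₁ hwg₂ hg₁x.mem_left
    hg₂y.mem_left fun h => not_reachIn_presented_of_side_ne side hx hy hxy
      (hg₁x.symm.trans (h.trans hg₂y))

/-- The vertices that Algorithm 1 colors `a_h` or `b_h` for some `h ≥ L`. -/
def highColored (G : SimpleGraph ℕ) (L : ℕ) : Set ℕ :=
  {y | ∃ h ≥ L, hasColorIndex (algoCol G) y h}

theorem index_le_of_mem_algoComp (hv : (algoCol G v).index = k) (hu : u ∈ algoComp G v k v) :
    (algoCol G u).index ≤ k :=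
  hu.mem_right.elim (fun h => (h ▸ hv).le) And.right

theorem componentIn_subset_algoComp {f i : ℕ} (hik : i ≤ k) (hu : u ∈ algoComp G v k v)
    (huf : G.Adj u f) : componentIn G (presented G v i) f ⊆ algoComp G v k v := fun _ hfy =>
  have hsub : presented G v i ⊆ insert v (presented G v k) :=
    (presented_mono le_rfl hik).trans (Set.subset_insert _ _)
  (hu.tail (hsub hfy.mem_left) huf).trans (hfy.mono hsub)

theorem exists_component_adj_of_highColored (hP9 : PFree G 9) {L : ℕ} (hL : 2 ≤ L) (hj : 1 ≤ j)
    (hv : (algoCol G v).index = k)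
    (hnot : ∀ h w p, L ≤ h → ¬ UniversalPair G v k h w p) (hu : u ∈ algoComp G v k v)
    (huj : (algoCol G u).index = j + 2) :
    ∃ f, G.Adj u f ∧
      (∀ b, ∃ x, algoCol G x = PalColor.a j ∧ side x = b ∧
        ReachIn G (presented G v (j + 1)) f x) ∧
      ∀ w, ReachIn G (presented G v (j + 1)) f w → w ∈ highColored G L → side w ≠ side u →
        G.Adj u w := by
  have huv : u ≤ v := hu.mem_right.elim le_of_eq fun h => h.1.le
  have hjk : j + 2 ≤ k := huj ▸ index_le_of_mem_algoComp hv hu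
  obtain ⟨f, z, hz, huf, hfz, hE⟩ := exists_pFreeFrom_component side hP9 (by omega) huv huj
  have hsub := componentIn_subset_algoComp (by omega : j + 1 ≤ k) hu huf
  refine ⟨f, huf, fun b => ?_, ?_⟩
  · obtain ⟨x, -, hx, hxb, g, hzg, hgx⟩ := exists_lt_color_a_of_index_eq_succ side hj
      hfz.mem_right.1.le (congrArg PalColor.index hz) b
    have hgx := hgx.mono (presented_mono le_rfl (Nat.le_succ j))
    exact ⟨x, hx, hxb, (hfz.tail hgx.mem_left hzg).trans hgx⟩
  · rintro w hfw ⟨h, hLh, hwh⟩ hwu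
    obtain ⟨h, rfl⟩ : ∃ h', h = h' + 1 := ⟨h - 1, by omega⟩
    exact adj_of_forall_not_univTo side hE huf hfw (by omega) hwh.index_eq
      (fun p hfp hp => hnot _ w p hLh ⟨hfw.mem_right.1, hsub hfw, hsub hfp, hwh, hp⟩) hwu

theorem containsX_of_forall_not_universalPair (hP9 : PFree G 9) {L : ℕ} (hL : 2 ≤ L)
    (hv : (algoCol G v).index = k) (hnot : ∀ h w p, L ≤ h → ¬ UniversalPair G v k h w p)
    (i : ℕ) (hu : u ∈ algoComp G v k v) (huj : hasColorIndex (algoCol G) u j)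
    (hij : L + 2 * i ≤ j) :
    ContainsX side (i + 1) (algoComp G v (j - 1) u ∩ highColored G L) (side u) := by
  induction i generalizing u j with
  | zero => exact containsX_one ⟨self_mem_algoComp, j, by omega, huj⟩
  | succ i ih =>
    obtain ⟨j, rfl⟩ : ∃ j', j = j' + 2 := ⟨j - 2, by omega⟩
    obtain ⟨f, huf, exists_child, hadj⟩ := exists_component_adj_of_highColored side hP9 hL
      (by omega) hv hnot hu huj.index_eq
    have hu_mem : u ∈ algoComp G v (j + 1) u ∩ highColored G L :=
      ⟨self_mem_algoComp, _, by omega, huj⟩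
    have hsub : componentIn G (presented G v (j + 1)) f ⊆ algoComp G v (j + 1) u :=
      fun _ hfy => mem_algoComp_iff.2 (Or.inr ⟨f, huf, hfy⟩)
    obtain _ | n := i
    · obtain ⟨x, hx, hxu, hfx⟩ := exists_child (!side u)
      have hx_high : x ∈ highColored G L := ⟨j, by omega, Or.inl hx⟩
      exact containsX_two hu_mem ⟨hsub hfx, hx_high⟩
        (hadj x hfx hx_high (hxu ▸ Bool.not_ne_self _))
    refine (containsX_insert_of_forall_exists_color_a (j := j) (t := v) side (fun b => ?_)
      fun w hw => hadj w hw.1 hw.2).mono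
        (Set.insert_subset hu_mem (Set.inter_subset_inter_left _ hsub))
    obtain ⟨x, hx, rfl, hfx⟩ := exists_child b
    have hjk : j + 2 ≤ k := huj.index_eq ▸ index_le_of_mem_algoComp hv hu
    have hxv := componentIn_subset_algoComp (by omega : j + 1 ≤ k) hu huf hfx
    have hxj : x ∈ presented G v j := ⟨hfx.mem_right.1, (congrArg PalColor.index hx).le⟩
    have hsub_x : algoComp G v (j - 1) x ⊆ componentIn G (presented G v j) x :=
      algoComp_subset_componentIn (presented_mono le_rfl (Nat.sub_le j 1)) (.refl hxj)
    have hsub_f : algoComp G v (j - 1) x ⊆ componentIn G (presented G v (j + 1)) f :=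
      algoComp_subset_componentIn (presented_mono le_rfl (by omega)) hfx
    exact ⟨x, hx, rfl, (ih hxv (Or.inl hx) (by omega)).mono fun w hw =>
      ⟨hsub_x hw.1, hsub_f hw.1, hw.2⟩⟩

theorem two_mul_le_sqrt {k s : ℕ} (hk : 2 * s ^ 2 ≤ k) : (2 * s : ℝ) ≤ Real.sqrt (2 * k) := by
  have hk' : (2 * s ^ 2 : ℝ) ≤ k := by exact_mod_cast hk
  exact Real.le_sqrt_of_sq_le (by linarith)

theorem aboveThreshold_of_le {s : ℕ} (hk : 2 * s ^ 2 ≤ k) (hj : k + 2 ≤ j + 2 * s) :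
    AboveThreshold k j := by
  have hj' : (k + 2 : ℝ) ≤ j + 2 * s := by exact_mod_cast hj
  have hsqrt := two_mul_le_sqrt hk
  unfold AboveThreshold
  linarith

-- The function `k ↦ k - √(2k) + 2` is increasing for `k ≥ 2(m + 1)²`, where it is at least
-- `2m² + 2m + 2`.
theorem AboveThreshold.two_mul_sq_lt {m : ℕ} (h : AboveThreshold k j)
    (hk : 2 * (m + 1) ^ 2 ≤ k) : 2 * m ^ 2 < j := by
  have hk' : (2 * (m + 1) ^ 2 : ℝ) ≤ k := by exact_mod_cast hk
  have hsqrt : (2 * (m + 1) : ℝ) ≤ Real.sqrt (2 * k) := by exact_mod_cast two_mul_le_sqrt hk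
  have hsq : Real.sqrt (2 * k) ^ 2 = 2 * k := Real.sq_sqrt (by positivity)
  unfold AboveThreshold at h
  have hj : (2 * m ^ 2 : ℝ) < j := by nlinarith
  exact_mod_cast hj

theorem one_le_floor_sqrt_half (hk : 2 ≤ k) : 1 ≤ ⌊Real.sqrt ((k : ℝ) / 2)⌋₊ := by
  have hk' : (2 : ℝ) ≤ k := by exact_mod_cast hk
  exact Nat.one_le_floor_iff _ |>.2 (Real.one_le_sqrt.2 (by linarith))

theorem two_mul_floor_sqrt_half_sq_le (k : ℕ) : 2 * ⌊Real.sqrt ((k : ℝ) / 2)⌋₊ ^ 2 ≤ k := by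
  have hfloor : (⌊Real.sqrt ((k : ℝ) / 2)⌋₊ : ℝ) ^ 2 ≤ k / 2 :=
    (Real.le_sqrt (by positivity) (by positivity)).1 (Nat.floor_le (Real.sqrt_nonneg _))
  have h : (2 * ⌊Real.sqrt ((k : ℝ) / 2)⌋₊ ^ 2 : ℝ) ≤ k := by linarith
  exact_mod_cast h

theorem containsX_of_universalPair {n p : ℕ}
    (ih : ∀ j < k, 2 * (n + 2) ^ 2 ≤ j → ∀ z, algoCol G z = PalColor.a j →
      ContainsX side (n + 2) (algoComp G z j z) (side z))
    (hk : 2 * (n + 3) ^ 2 ≤ k) (hkj : AboveThreshold k j)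
    (h : UniversalPair G t k j u p) :
    ContainsX side (n + 3) (algoComp G t k t) (side p) := by
  have hjk : j ≤ k := h.colorIndex.index_eq ▸ (h.mem.mem_right.resolve_left h.lt.ne).2
  have hj : 2 * (n + 2) ^ 2 < j := hkj.two_mul_sq_lt hk
  have hpos : 0 < (n + 2) ^ 2 := by positivity
  obtain ⟨j, rfl⟩ : ∃ j', j = j' + 1 := ⟨j - 1, by omega⟩
  have hsub : algoComp G t j u ⊆ algoComp G t k t := algoComp_subset_componentIn
    ((presented_mono le_rfl (by omega)).trans (Set.subset_insert _ _)) h.mem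
  exact (containsX_insert_of_univTo side (by omega) h.lt h.colorIndex.index_eq h.univTo
    (ih j hjk (by omega))).mono (Set.insert_subset h.mem_universal hsub)

theorem containsX_of_algoCol_eq_a (hP9 : PFree G 9) {s : ℕ} (hs : 1 ≤ s) (hk : 2 * s ^ 2 ≤ k)
    (hv : algoCol G v = PalColor.a k) : ContainsX side s (algoComp G v k v) (side v) := by
  induction k using Nat.strong_induction_on generalizing v s with
  | _ k ih =>
  have hvk : (algoCol G v).index = k := congrArg PalColor.index hv
  have hk₂ : 2 ≤ k := by nlinarith
  obtain _ | _ | _ | n := s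
  · contradiction
  · exact containsX_one self_mem_algoComp
  · obtain ⟨j, rfl⟩ : ∃ j, k = j + 1 := ⟨k - 1, by omega⟩
    obtain ⟨_, -, -, -, f, hvf, hf⟩ :=
      exists_lt_color_a_of_index_eq_succ side (by omega) le_rfl hvk true
    exact containsX_two self_mem_algoComp (componentIn_subset_algoComp (Nat.le_succ j)
      self_mem_algoComp hvf (.refl hf.mem_left)) hvf
  obtain ⟨t, htv, ht, j, u, p, hkj, hup, hpv⟩ | hnot := exists_universalPair_or_forall_not side hv
  · have hsub : algoComp G t k t ⊆ algoComp G v k v := algoComp_subset_componentIn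
      ((presented_mono htv le_rfl).trans (Set.subset_insert _ _)) ht
    exact hpv ▸ (containsX_of_universalPair side
      (fun j hj hnj z hz => ih j hj (by omega) hnj hz) hk hkj hup).mono hsub
  · have hnk : 2 * (n + 3) ≤ k := by nlinarith
    refine (containsX_of_forall_not_universalPair side hP9 (L := k + 2 - 2 * (n + 3)) (by omega) hvk
      (fun h w p hLh => hnot h w p (aboveThreshold_of_le hk (by omega))) (n + 2) self_mem_algoComp
      (Or.inl hv) (by omega)).mono fun w hw => ?_
    exact algoComp_subset_componentIn
      ((presented_mono le_rfl (Nat.sub_le k 1)).trans (Set.subset_insert _ _))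
      self_mem_algoComp hw.1

end ContainsX

theorem stmt9_general {G : SimpleGraph ℕ} (hP9 : PFree G 9) (side : G.Coloring Bool)
    {v k : ℕ} (hk : 2 ≤ k) (hv : algoCol G v = PalColor.a k) :
    ∃ e : XGraph (⌊Real.sqrt ((k : ℝ) / 2)⌋₊) ↪g G,
      (∀ x, e x ∈ comp G (algoCol G) v k v) ∧
      side (e (XRoot (⌊Real.sqrt ((k : ℝ) / 2)⌋₊))) = side v := by
  obtain ⟨e, he⟩ := containsX_of_algoCol_eq_a side hP9 (one_le_floor_sqrt_half hk)
    (two_mul_floor_sqrt_half_sq_le k) hv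
  refine ⟨e, fun x => comp_algoCol G v k v ▸ (he x).1, ?_⟩
  rw [(he _).2, xSide_xRoot, Bool.true_beq]

theorem stmt9 (G : SimpleGraph ℕ) (n : ℕ) (hfin : ∀ i j, G.Adj i j → i < n ∧ j < n)
    (hP9 : PFree G 9)
    (side : ℕ → Bool) (hside : ∀ x y, G.Adj x y → side x ≠ side y)
    (v k : ℕ) (hk : 2 ≤ k) (hv : algoCol G v = PalColor.a k) :
    ∃ e : XGraph (⌊Real.sqrt ((k : ℝ) / 2)⌋₊) ↪g G,
      (∀ x, e x ∈ comp G (algoCol G) v k v) ∧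
      side (e (XRoot (⌊Real.sqrt ((k : ℝ) / 2)⌋₊))) = side v :=
  stmt9_general hP9 (.mk side (hside _ _)) hk hv
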